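/- arXiv:1110.1171 — 3 statements merged into one kernel-verified Lean document; each statement's English description precedes it below -/
import Mathlib

section
/- Let c, d > 2 and n = c + d. With the Segre-type map σ: A → B as above, equip B with the ℤ-grading where deg(S_{αβ}) = deg(S_{γδ}) = 0, deg(S_κ) = 1 for κ ≤ c, and deg(S_κ) = −1 for κ ≥ c+1. Then the image σ(A) equals the degree-zero subalgebra B₀ of B. -/
open MvPolynomial

/-- Index set for the Plücker variables `T_{ij}`, `i < j`. -/
abbrev PIdx (n : ℕ) := {p : Fin n × Fin n // p.1 < p.2}

/-- Index set for the variables of `B`: the variables `S_{αβ}` (`α < β ≤ c`) and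
`S_{γδ}` (`c + 1 ≤ γ < δ`) are indexed by pairs lying entirely inside `{1,…,c}` or
entirely inside `{c+1,…,n}` (0-indexed: `p.2.val < c` or `c ≤ p.1.val`), and the
variables `S_κ` (`1 ≤ κ ≤ n`) are indexed by `Fin n`. -/
abbrev BVar (c n : ℕ) :=
  {p : PIdx n // p.val.2.val < c ∨ c ≤ p.val.1.val} ⊕ Fin n

/-- The Segre-type homomorphism `σ : A → B`: `T_{ij} ↦ S_{ij}` if `j ≤ c`,
`T_{ij} ↦ S_iS_j` if `i ≤ c < j`, and `T_{ij} ↦ S_{ij}` if `c + 1 ≤ i`. -/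
noncomputable def segre (c n : ℕ) :
    MvPolynomial (PIdx n) ℂ →ₐ[ℂ] MvPolynomial (BVar c n) ℂ :=
  aeval (fun p : PIdx n =>
    if h : p.val.2.val < c ∨ c ≤ p.val.1.val then X (Sum.inl ⟨p, h⟩)
    else X (Sum.inr p.val.1) * X (Sum.inr p.val.2))

/-- The weights of the `ℤ`-grading of `B`: pair variables get weight `0`, and `S_κ`
gets weight `1` for `κ ≤ c` and `-1` for `κ ≥ c + 1`. -/
def segreWeight (c n : ℕ) : BVar c n → ℤ
  | Sum.inl _ => 0
  | Sum.inr κ => if κ.val < c then 1 else -1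

theorem segre_isWeightedHomogeneous (c n : ℕ) (a : MvPolynomial (PIdx n) ℂ) :
    (segre c n a).IsWeightedHomogeneous (segreWeight c n) 0 := by
  induction a using MvPolynomial.induction_on with
  | C r =>
    rw [← algebraMap_eq, AlgHom.commutes, algebraMap_eq]
    exact isWeightedHomogeneous_C _ r
  | add p q hp hq =>
    rw [map_add]
    exact hp.add hq
  | mul_X p i hp =>
    rw [map_mul, ← add_zero (0 : ℤ)]
    refine hp.mul ?_
    simp only [segre, aeval_X]
    split_ifs with h
    · exact isWeightedHomogeneous_X ℂ (segreWeight c n) (Sum.inl ⟨i, h⟩)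
    · push Not at h
      have hX := (isWeightedHomogeneous_X ℂ (segreWeight c n) (Sum.inr i.val.1)).mul
        (isWeightedHomogeneous_X ℂ (segreWeight c n) (Sum.inr i.val.2))
      simpa [segreWeight, h.1.not_gt, h.2] using hX

theorem X_inl_mem_range_segre (c n : ℕ)
    (v : {p : PIdx n // p.val.2.val < c ∨ c ≤ p.val.1.val}) :
    X (Sum.inl v) ∈ (segre c n).range :=
  ⟨X v.1, by simp [segre, v.2]⟩

theorem X_inr_mul_X_inr_mem_range_segre (c n : ℕ) (i j : Fin n) (hi : i.val < c)
    (hj : c ≤ j.val) :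
    X (Sum.inr i) * X (Sum.inr j) ∈ (segre c n).range :=
  ⟨X ⟨(i, j), Fin.lt_def.2 (hi.trans_le hj)⟩, by simp [segre, hi.not_ge, hj.not_gt]⟩

/-- A nonzero exponent vector of weight zero that avoids the pair variables involves some `S_i`
with `i ≤ c` and some `S_j` with `j ≥ c + 1`. -/
theorem exists_inr_inr_of_weight_eq_zero (c n : ℕ) (s : BVar c n →₀ ℕ) (hs : s ≠ 0)
    (hw : Finsupp.weight (segreWeight c n) s = 0) (hl : ∀ v, s (Sum.inl v) = 0) :
    ∃ i j : Fin n, i.val < c ∧ c ≤ j.val ∧ s (Sum.inr i) ≠ 0 ∧ s (Sum.inr j) ≠ 0 := by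
  rw [Finsupp.weight_apply, Finsupp.sum] at hw
  have hne : ∃ x ∈ s.support, s x • segreWeight c n x ≠ 0 := by
    obtain ⟨x, hx⟩ := Finsupp.ne_iff.1 hs
    refine ⟨x, Finsupp.mem_support_iff.2 hx, ?_⟩
    rcases x with v | k
    · exact absurd (hl v) hx
    · refine smul_ne_zero hx ?_
      simp only [segreWeight]
      split_ifs <;> decide
  obtain ⟨x, hx, hxpos⟩ := Finset.exists_pos_of_sum_zero_of_exists_nonzero _ hw hne
  obtain ⟨y, hy, hypos⟩ := Finset.exists_pos_of_sum_zero_of_exists_nonzero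
    (s := s.support) (fun x => -(s x • segreWeight c n x))
    (by rw [Finset.sum_neg_distrib, hw, neg_zero]) (by simpa only [neg_ne_zero] using hne)
  rw [Finsupp.mem_support_iff] at hx hy
  rcases x with v | i
  · exact absurd (hl v) hx
  rcases y with v | j
  · exact absurd (hl v) hy
  refine ⟨i, j, ?_, ?_, hx, hy⟩
  · by_contra h
    simp only [segreWeight, h, if_false, nsmul_eq_mul] at hxpos
    linarith [Int.natCast_nonneg (s (Sum.inr i))]
  · by_contra! h
    simp only [segreWeight, h, if_true, nsmul_eq_mul] at hypos
    linarith [Int.natCast_nonneg (s (Sum.inr j))]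

theorem monomial_mem_range_segre (c n : ℕ) (s : BVar c n →₀ ℕ)
    (hw : Finsupp.weight (segreWeight c n) s = 0) :
    monomial s (1 : ℂ) ∈ (segre c n).range := by
  induction hk : s.degree using Nat.strong_induction_on generalizing s with
  | _ k ih =>
  subst hk
  by_cases hs : s = 0
  · subst hs
    exact one_mem _
  by_cases hl : ∀ v, s (Sum.inl v) = 0
  · obtain ⟨i, j, hi, hj, hsi, hsj⟩ := exists_inr_inr_of_weight_eq_zero c n s hs hw hl
    have hij : i ≠ j := fun h => (h ▸ hi).not_ge hj
    obtain ⟨t, rfl⟩ : ∃ t, s = Finsupp.single (Sum.inr i) 1 + Finsupp.single (Sum.inr j) 1 + t := by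
      refine exists_add_of_le fun x => ?_
      classical
      simp only [Finsupp.add_apply, Finsupp.single_apply]
      split_ifs with h₁ h₂ h₂
      · exact absurd (Sum.inr_injective (h₁.trans h₂.symm)) hij
      · subst h₁; omega
      · subst h₂; omega
      · omega
    have ht : Finsupp.weight (segreWeight c n) t = 0 := by
      simpa [map_add, Finsupp.weight_single, segreWeight, hi, hj.not_gt] using hw
    have := mul_mem (X_inr_mul_X_inr_mem_range_segre c n i j hi hj)
      (ih t.degree (by simp only [map_add, Finsupp.degree_single]; omega) t ht rfl)
    simpa [X, monomial_mul] using this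
  · push Not at hl
    obtain ⟨v, hv⟩ := hl
    obtain ⟨t, rfl⟩ : ∃ t, s = Finsupp.single (Sum.inl v) 1 + t :=
      exists_add_of_le (Finsupp.single_le_iff.2 (Nat.one_le_iff_ne_zero.2 hv))
    have ht : Finsupp.weight (segreWeight c n) t = 0 := by
      simpa [map_add, Finsupp.weight_single, segreWeight] using hw
    have := mul_mem (X_inl_mem_range_segre c n v)
      (ih t.degree (by simp only [map_add, Finsupp.degree_single]; omega) t ht rfl)
    simpa [X, monomial_mul] using this

/-- For `c, d > 2` and `n = c + d`, the image of the Segre-type map `σ : A → B` is the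
degree-zero subalgebra `B₀` of `B` for the stated `ℤ`-grading: a polynomial lies in the
image of `σ` iff all its monomials have weighted degree `0`. -/
theorem stmt_6 (c d : ℕ) (hc : 2 < c) (hd : 2 < d)
    (f : MvPolynomial (BVar c (c + d)) ℂ) :
    f ∈ (segre c (c + d)).range ↔
      f.IsWeightedHomogeneous (segreWeight c (c + d)) 0 := by
  constructor
  · rintro ⟨a, rfl⟩
    exact segre_isWeightedHomogeneous c (c + d) a
  · intro hf
    rw [f.as_sum]
    refine sum_mem fun s hs => ?_
    rw [← mul_one (coeff s f), ← smul_eq_mul, ← smul_monomial]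
    exact Subalgebra.smul_mem _
      (monomial_mem_range_segre c (c + d) s (hf (mem_support_iff.1 hs))) _
end

section
/- Let c, d > 2 and n = c + d. The quotient of ℂ[T_{ij}, T_∞] by the ideal J of the previous statement has Krull dimension 2(c+d) − 3. -/
open MvPolynomial

/-- Index set for the variables `T_{ij}` together with the extra variable `T_∞`. -/
abbrev Idx (n : ℕ) := PIdx n ⊕ Unit

/-- The variable `T_{ij}`. -/
noncomputable def W {n : ℕ} (i j : Fin n) (h : i < j) : MvPolynomial (Idx n) ℂ :=
  X (Sum.inl ⟨(i, j), h⟩)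

/-- The variable `T_∞`. -/
noncomputable def Tinf {n : ℕ} : MvPolynomial (Idx n) ℂ := X (Sum.inr ())

/-- Generators of the ideal `I`: `T_∞T_{ij}T_{kl} - T_{ik}T_{jl} + T_{il}T_{jk}` for
quadruples `i < j ≤ c < k < l` (1-indexed; `j ≤ c` is `j.val < c` and `c + 1 ≤ k` is
`c ≤ k.val` in 0-indexed terms), and the Plücker trinomials
`T_{ij}T_{kl} - T_{ik}T_{jl} + T_{il}T_{jk}` for all other quadruples `i < j < k < l`. -/
def IGens (c n : ℕ) : Set (MvPolynomial (Idx n) ℂ) :=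
  {P | ∃ (i j k l : Fin n) (hij : i < j) (hjk : j < k) (hkl : k < l),
    ((j.val < c ∧ c ≤ k.val) ∧
      P = Tinf * W i j hij * W k l hkl - W i k (hij.trans hjk) * W j l (hjk.trans hkl)
            + W i l (hij.trans (hjk.trans hkl)) * W j k hjk) ∨
    (¬(j.val < c ∧ c ≤ k.val) ∧
      P = W i j hij * W k l hkl - W i k (hij.trans hjk) * W j l (hjk.trans hkl)
            + W i l (hij.trans (hjk.trans hkl)) * W j k hjk)}

/-- Generators of the ideal `J = I + (T_∞)`: the variable `T_∞`, the binomials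
`-T_{ik}T_{jl} + T_{il}T_{jk}` for quadruples `i < j ≤ c < k < l`, and the Plücker
trinomials for all other quadruples `i < j < k < l`. -/
def JGens (c n : ℕ) : Set (MvPolynomial (Idx n) ℂ) :=
  insert Tinf
    {P | ∃ (i j k l : Fin n) (hij : i < j) (hjk : j < k) (hkl : k < l),
      ((j.val < c ∧ c ≤ k.val) ∧
        P = - W i k (hij.trans hjk) * W j l (hjk.trans hkl)
              + W i l (hij.trans (hjk.trans hkl)) * W j k hjk) ∨
      (¬(j.val < c ∧ c ≤ k.val) ∧
        P = W i j hij * W k l hkl - W i k (hij.trans hjk) * W j l (hjk.trans hkl)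
              + W i l (hij.trans (hjk.trans hkl)) * W j k hjk)}

/-- An algebra of finite type over a field has Krull dimension at most `N` if all its prime
quotients have transcendence degree at most `N`. -/
theorem ringKrullDim_le_of_trdeg_quotient_le {k A : Type*} [Field k] [CommRing A] [Algebra k A]
    [Algebra.FiniteType k A] (N : ℕ)
    (h : ∀ P : Ideal A, P.IsPrime → Algebra.trdeg k (A ⧸ P) ≤ N) : ringKrullDim A ≤ N := by
  rcases subsingleton_or_nontrivial A with hA | hA
  · rw [ringKrullDim_eq_bot_of_subsingleton]
    exact bot_le
  obtain ⟨s, g, hg, hint⟩ := exists_integral_inj_algHom_of_fg k A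
  have hdim : ringKrullDim A ≤ s := by
    have hB : ringKrullDim (MvPolynomial (Fin s) k) = s := by
      rw [MvPolynomial.ringKrullDim_of_isNoetherianRing, ringKrullDim_eq_zero_of_field]
      simp
    rw [← hB]
    algebraize [g.toRingHom]
    have : Algebra.IsIntegral (MvPolynomial (Fin s) k) A := ⟨hint⟩
    refine Order.krullDim_le_of_strictMono
      (PrimeSpectrum.comap (algebraMap (MvPolynomial (Fin s) k) A)) fun P Q hPQ ↦ ?_
    exact Ideal.IsIntegral.comap_lt_comap hPQ
  obtain ⟨P, hP, hker⟩ : ∃ P : Ideal A, P.IsPrime ∧ P.comap g.toRingHom = ⊥ := by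
    algebraize [g.toRingHom]
    have : Algebra.IsIntegral (MvPolynomial (Fin s) k) A := ⟨hint⟩
    obtain ⟨P, -, hP, hPg⟩ := Ideal.exists_ideal_over_prime_of_isIntegral
      (⊥ : Ideal (MvPolynomial (Fin s) k)) (⊥ : Ideal A)
      (le_of_eq ((RingHom.injective_iff_ker_eq_bot _).1 hg))
    exact ⟨P, hP, hPg⟩
  have hinj : Function.Injective ((Ideal.Quotient.mkₐ k P).comp g) := by
    rw [injective_iff_map_eq_zero]
    intro a ha
    have : a ∈ P.comap g.toRingHom :=
      (Ideal.Quotient.eq_zero_iff_mem (I := P)).1 ha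
    rwa [hker] at this
  have hle := lift_trdeg_le_of_injective _ hinj
  rw [MvPolynomial.trdeg_of_isDomain] at hle
  have hle' : (s : Cardinal) ≤ Algebra.trdeg k (A ⧸ P) := by simpa using hle
  have : s ≤ N := by exact_mod_cast hle'.trans (h P hP)
  exact hdim.trans (by exact_mod_cast this)

/-- The point with coordinates `x_i y_j - x_j y_i` inside the blocks, `x_i x_j` across the blocks,
and vanishing last coordinate. -/
def blockPoint {B : Type*} [CommRing B] (c : ℕ) {n : ℕ} (x y : Fin n → B) : Idx n → B
  | .inl p => if p.1.1.val < c ∧ c ≤ p.1.2.val then x p.1.1 * x p.1.2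
      else x p.1.1 * y p.1.2 - x p.1.2 * y p.1.1
  | .inr _ => 0

theorem aeval_blockPoint_eq_zero {B : Type*} [CommRing B] [Algebra ℂ B] {c n : ℕ} (x y : Fin n → B)
    {P : MvPolynomial (Idx n) ℂ} (hP : P ∈ Ideal.span (JGens c n)) :
    aeval (blockPoint c x y) P = 0 := by
  suffices Ideal.span (JGens c n) ≤ RingHom.ker (aeval (R := ℂ) (blockPoint c x y)) from this hP
  rw [Ideal.span_le]
  rintro _ (rfl | ⟨i, j, k, l, hij, hjk, hkl, ⟨h, rfl⟩ | ⟨h, rfl⟩⟩)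
  · simp [Tinf, blockPoint]
  · have h₁ : i.val < c := by omega
    have h₂ : c ≤ l.val := by omega
    simp [W, blockPoint, h₁, h₂, h]
    ring
  · simp only [W, SetLike.mem_coe, RingHom.mem_ker, map_add, map_sub, map_mul, aeval_X, blockPoint]
    split_ifs <;> first | (exfalso; omega) | ring1

/-- If `f : A → B` kills `I`, `B` is a domain, and `e ∘ f` is surjective and kills some `r` with
`f r ≠ 0`, then the dimension of `A ⧸ I` exceeds that of the target of `e`. -/
theorem ringKrullDim_succ_le_quotient {A B C : Type*} [CommRing A] [CommRing B] [IsDomain B]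
    [CommRing C] {I : Ideal A} (f : A →+* B) (e : B →+* C) (hI : I ≤ RingHom.ker f)
    (hef : Function.Surjective (e.comp f)) {r : A} (hr : f r ≠ 0) (her : e (f r) = 0) :
    ringKrullDim C + 1 ≤ ringKrullDim (A ⧸ I) := by
  have hlift : ringKrullDim f.range ≤ ringKrullDim (A ⧸ I) :=
    ringKrullDim_le_of_surjective
      (Ideal.Quotient.lift I f.rangeRestrict fun a ha ↦ Subtype.ext (hI ha))
      (Ideal.Quotient.lift_surjective_of_surjective _ _ f.rangeRestrict_surjective)
  refine le_trans ?_ hlift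
  refine ringKrullDim_succ_le_of_surjective (e.comp f.range.subtype) (fun z ↦ ?_)
    (r := f.rangeRestrict r)
    (mem_nonZeroDivisors_of_ne_zero fun h ↦ hr (congrArg Subtype.val h)) her
  obtain ⟨a, rfl⟩ := hef z
  exact ⟨f.rangeRestrict a, rfl⟩

theorem le_ringKrullDim_quotient_JGens {c d : ℕ} (hc : 2 < c) (hd : 2 < d) :
    ((2 * (c + d) - 3 : ℕ) : WithBot ℕ∞) ≤
      ringKrullDim (MvPolynomial (Idx (c + d)) ℂ ⧸ Ideal.span (JGens c (c + d))) := by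
  let S := MvPolynomial (Fin (c + d - 2) ⊕ Fin (c + d - 2)) ℂ
  let x (i : Fin (c + d)) : Polynomial S :=
    if h : 0 < i.val ∧ i.val + 1 < c + d then
      Polynomial.C (X (.inl ⟨i.val - 1, by omega⟩))
    else if i.val = 0 then Polynomial.X else 1
  let y (i : Fin (c + d)) : Polynomial S :=
    if h : 0 < i.val ∧ i.val + 1 < c + d then
      Polynomial.C (X (.inr ⟨i.val - 1, by omega⟩))
    else 0
  let f : MvPolynomial (Idx (c + d)) ℂ →ₐ[ℂ] Polynomial S := aeval (blockPoint c x y)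
  let e : Polynomial S →ₐ[ℂ] S := (Polynomial.aeval (1 : S)).restrictScalars ℂ
  let a : Fin (c + d) := ⟨0, by omega⟩
  let b : Fin (c + d) := ⟨c + d - 1, by omega⟩
  have hab : a < b := Fin.lt_def.2 (by simp only [a, b]; omega)
  have hxa : x a = Polynomial.X := by simp [x, a]
  have hya : y a = 0 := by simp [y, a]
  have hxb : x b = 1 := by
    simp only [x, b]
    rw [dif_neg (by omega), if_neg (by omega)]
  have hyb : y b = 0 := by
    simp only [y, b]
    rw [dif_neg (by omega)]
  let mid (i : Fin (c + d - 2)) : Fin (c + d) := ⟨i.val + 1, by omega⟩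
  have ha_mid (i) : a < mid i := Fin.lt_def.2 (by simp [a, mid])
  have hmid_b (i) : mid i < b := Fin.lt_def.2 (by simp only [b, mid]; omega)
  have hx_mid (i) : x (mid i) = Polynomial.C (X (.inl i)) := by
    simp only [x, mid]
    rw [dif_pos (by omega)]
    rfl
  have hy_mid (i) : y (mid i) = Polynomial.C (X (.inr i)) := by
    simp only [y, mid]
    rw [dif_pos (by omega)]
    rfl
  have hf (i j : Fin (c + d)) (h : i < j) : f (W i j h) =
      if i.val < c ∧ c ≤ j.val then x i * x j else x i * y j - x j * y i := aeval_X _ _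
  have hval (i j : Fin (c + d)) (h : i < j) : e (f (W i j h)) ∈ (e.comp f).range :=
    ⟨_, rfl⟩
  have hg : Function.Surjective (e.comp f) := by
    rw [← AlgHom.range_eq_top, eq_top_iff, ← adjoin_range_X, Algebra.adjoin_le_iff]
    rintro _ ⟨i | i, rfl⟩
    · by_cases hi : (mid i).val < c
      · have h := hval _ _ (hmid_b i)
        rw [hf, if_pos ⟨hi, by simp only [b]; omega⟩, hx_mid, hxb] at h
        simpa [e] using h
      · have h := hval _ _ (ha_mid i)
        rw [hf, if_pos ⟨by simp only [a]; omega, by omega⟩, hx_mid, hxa] at h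
        simpa [e] using h
    · by_cases hi : (mid i).val < c
      · have h := hval _ _ (ha_mid i)
        rw [hf, if_neg (by omega), hy_mid, hxa, hya] at h
        simpa [e] using h
      · have h := hval _ _ (hmid_b i)
        rw [hf, if_neg (by omega), hy_mid, hxb, hyb] at h
        rw [show e (x (mid i) * 0 - 1 * Polynomial.C (X (.inr i))) = -X (.inr i) by simp [e]] at h
        exact neg_mem_iff.1 h
  have hS : ringKrullDim S = (2 * (c + d) - 4 : ℕ) := by
    rw [MvPolynomial.ringKrullDim_of_isNoetherianRing, ringKrullDim_eq_zero_of_field]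
    simp only [Nat.card_eq_fintype_card, Fintype.card_sum, Fintype.card_fin, zero_add]
    congr 1
    omega
  have hr : f (W a b hab - 1) = Polynomial.X - Polynomial.C 1 := by
    rw [map_sub, hf, if_pos ⟨by simp only [a]; omega, by simp only [b]; omega⟩, hxa, hxb]
    simp
  have hI : Ideal.span (JGens c (c + d)) ≤ RingHom.ker (f : _ →+* Polynomial S) :=
    fun P hP ↦ aeval_blockPoint_eq_zero x y hP
  have hsucc := ringKrullDim_succ_le_quotient _ (e : _ →+* S) hI hg (r := W a b hab - 1)
    (by
      rw [RingHom.coe_coe, hr]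
      exact Polynomial.X_sub_C_ne_zero 1)
    (by
      rw [RingHom.coe_coe, RingHom.coe_coe, hr]
      simp [e])
  rw [hS] at hsucc
  refine le_trans (le_of_eq ?_) hsucc
  rw [show 2 * (c + d) - 3 = 2 * (c + d) - 4 + 1 by omega]
  push_cast
  rfl

section Skew

variable {n : ℕ} {D : Type*} [CommRing D] {s : Fin n → Fin n → D}

/-- The skew-symmetric matrix with prescribed entries above the diagonal. -/
def skewExt (t : PIdx n → D) (i j : Fin n) : D :=
  if h : i < j then t ⟨(i, j), h⟩ else if h : j < i then -t ⟨(j, i), h⟩ else 0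

theorem skewExt_of_lt (t : PIdx n → D) {i j : Fin n} (h : i < j) :
    skewExt t i j = t ⟨(i, j), h⟩ := dif_pos h

theorem skewExt_self (t : PIdx n → D) (i : Fin n) : skewExt t i i = 0 := by
  simp [skewExt]

theorem skewExt_swap (t : PIdx n → D) (i j : Fin n) : skewExt t j i = -skewExt t i j := by
  rcases lt_trichotomy i j with h | rfl | h
  · simp [skewExt, h, h.not_gt]
  · simp [skewExt]
  · simp [skewExt, h, h.not_gt]

/-- The Plücker relations for increasing quadruples imply those for arbitrary quadruples. The
quadruples considered are those without exactly two indices below `c`. -/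
theorem plucker_of_sorted {c : ℕ} (hself : ∀ i, s i i = 0) (hswap : ∀ i j, s j i = -s i j)
    (h : ∀ i j k l : Fin n, i < j → j < k → k < l → ¬(j.val < c ∧ c ≤ k.val) →
      s i j * s k l - s i k * s j l + s i l * s j k = 0) (i j k l : Fin n)
    (hc : (if i.val < c then 1 else 0) + (if j.val < c then 1 else 0) +
      (if k.val < c then 1 else 0) + (if l.val < c then 1 else 0) ≠ 2) :
    s i j * s k l - s i k * s j l + s i l * s j k = 0 := by
  let P (i j k l : Fin n) : Prop := (if i.val < c then 1 else 0) + (if j.val < c then 1 else 0) +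
      (if k.val < c then 1 else 0) + (if l.val < c then 1 else 0) ≠ 2 →
    s i j * s k l - s i k * s j l + s i l * s j k = 0
  have swap₁ {i j k l} (H : P i j k l) : P j i k l := fun hc ↦ by
    rw [hswap i j]
    linear_combination -H (by omega)
  have swap₂ {i j k l} (H : P i j k l) : P i k j l := fun hc ↦ by
    rw [hswap j k]
    linear_combination -H (by omega)
  have swap₃ {i j k l} (H : P i j k l) : P i j l k := fun hc ↦ by
    rw [hswap k l]
    linear_combination -H (by omega)
  have sorted {i j k l : Fin n} (hij : i ≤ j) (hjk : j ≤ k) (hkl : k ≤ l) : P i j k l := fun hc ↦ by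
    rcases hij.eq_or_lt with rfl | hij
    · rw [hself]
      ring
    rcases hjk.eq_or_lt with rfl | hjk
    · rw [hself]
      ring
    rcases hkl.eq_or_lt with rfl | hkl
    · rw [hself]
      ring
    refine h i j k l hij hjk hkl fun hjk' ↦ hc ?_
    rw [if_pos (by omega), if_pos (by omega), if_neg (by omega), if_neg (by omega)]
  have sorted₃ {i j k : Fin n} (l : Fin n) (hij : i ≤ j) (hjk : j ≤ k) : P i j k l := by
    rcases le_total k l with hkl | hkl
    · exact sorted hij hjk hkl
    refine swap₃ ?_
    rcases le_total j l with hjl | hjl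
    · exact sorted hij hjl hkl
    refine swap₂ ?_
    rcases le_total i l with hil | hil
    · exact sorted hil hjl hjk
    exact swap₁ (sorted hil hij hjk)
  have sorted₂ {i j : Fin n} (k l : Fin n) (hij : i ≤ j) : P i j k l := by
    rcases le_total j k with hjk | hjk
    · exact sorted₃ l hij hjk
    refine swap₂ ?_
    rcases le_total i k with hik | hik
    · exact sorted₃ l hik hjk
    exact swap₁ (sorted₃ l hik hij)
  rcases le_total i j with hij | hij
  · exact sorted₂ k l hij hc
  · exact swap₁ (sorted₂ k l hij) hc

theorem rank_one_of_sorted {c : ℕ}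
    (h : ∀ i j k l : Fin n, i < j → j < k → k < l → j.val < c ∧ c ≤ k.val →
      s i k * s j l = s i l * s j k) {i p j q : Fin n} (hi : i.val < c) (hp : p.val < c)
    (hj : c ≤ j.val) (hq : c ≤ q.val) : s i j * s p q = s i q * s p j := by
  rcases lt_trichotomy i p with hip | rfl | hip
  · rcases lt_trichotomy j q with hjq | rfl | hjq
    · exact h i p j q hip (by omega) hjq ⟨hp, hj⟩
    · rfl
    · exact (h i p q j hip (by omega) hjq ⟨hp, hq⟩).symm
  · ring
  · rcases lt_trichotomy j q with hjq | rfl | hjq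
    · linear_combination -h p i j q hip (by omega) hjq ⟨hi, hj⟩
    · rfl
    · linear_combination h p i q j hip (by omega) hjq ⟨hi, hq⟩

variable [Algebra ℂ D]

/-- If the entries of a skew-symmetric matrix on `U` are determined by the nonzero pivot `s p q` and
the entries in the columns `p` and `q`, they depend on `2 * #U - 3` of its entries. -/
theorem exists_finset_of_pivot (hself : ∀ i, s i i = 0) (hswap : ∀ i j, s j i = -s i j)
    {U : Finset (Fin n)} {p q : Fin n} (hp : p ∈ U) (hq : q ∈ U) (hpq : p ≠ q)
    (hrel : ∀ i ∈ U, ∀ j ∈ U, i ≤ j → s i j * s p q = s i p * s j q - s i q * s j p ∨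
      s i j * s p q = s i q * s p j) :
    ∃ S : Finset D, S.card ≤ 2 * U.card - 3 ∧ s p q ∈ Algebra.adjoin ℂ (S : Set D) ∧
      ∀ i ∈ U, ∀ j ∈ U, s i j * s p q ∈ Algebra.adjoin ℂ (S : Set D) := by
  classical
  let V := (U.erase p).erase q
  let S := insert (s p q) (V.image (s · p) ∪ V.image (s · q))
  have hV : V.card = U.card - 1 - 1 := by
    rw [Finset.card_erase_of_mem (Finset.mem_erase.2 ⟨hpq.symm, hq⟩), Finset.card_erase_of_mem hp]
  have hU : 2 ≤ U.card := by
    rw [← Finset.card_pair hpq]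
    exact Finset.card_le_card (by simp [Finset.insert_subset_iff, hp, hq])
  have hS : S.card ≤ 2 * U.card - 3 := by
    have h₁ := Finset.card_insert_le (s p q) (V.image (s · p) ∪ V.image (s · q))
    have h₂ := Finset.card_union_le (V.image (s · p)) (V.image (s · q))
    have h₃ := Finset.card_image_le (s := V) (f := (s · p))
    have h₄ := Finset.card_image_le (s := V) (f := (s · q))
    change S.card ≤ _ at h₁
    omega
  have hmem : s p q ∈ Algebra.adjoin ℂ (S : Set D) :=
    Algebra.subset_adjoin (by simp [S])
  have hcolp (i) (hi : i ∈ U) : s i p ∈ Algebra.adjoin ℂ (S : Set D) := by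
    by_cases hip : i = p
    · rw [hip, hself]
      exact zero_mem _
    by_cases hiq : i = q
    · rw [hiq, hswap]
      exact neg_mem hmem
    refine Algebra.subset_adjoin (Finset.mem_coe.2 (Finset.mem_insert_of_mem
      (Finset.mem_union_left _ (Finset.mem_image_of_mem (s · p) ?_))))
    simp [V, hi, hip, hiq]
  have hcolq (i) (hi : i ∈ U) : s i q ∈ Algebra.adjoin ℂ (S : Set D) := by
    by_cases hiq : i = q
    · rw [hiq, hself]
      exact zero_mem _
    by_cases hip : i = p
    · rwa [hip]
    refine Algebra.subset_adjoin (Finset.mem_coe.2 (Finset.mem_insert_of_mem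
      (Finset.mem_union_right _ (Finset.mem_image_of_mem (s · q) ?_))))
    simp [V, hi, hip, hiq]
  refine ⟨S, hS, hmem, fun i hi j hj ↦ ?_⟩
  wlog hij : i ≤ j generalizing i j
  · rw [hswap j i, neg_mul]
    exact neg_mem (this j hj i hi (le_of_not_ge hij))
  rcases hrel i hi j hj hij with h | h
  · rw [h]
    exact sub_mem (mul_mem (hcolp i hi) (hcolq j hj)) (mul_mem (hcolq i hi) (hcolp j hj))
  · rw [h, hswap j p]
    exact mul_mem (hcolq i hi) (neg_mem (hcolp j hj))

theorem exists_finset_of_plucker [Nontrivial D] (hself : ∀ i, s i i = 0)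
    (hswap : ∀ i j, s j i = -s i j) (U : Finset (Fin n))
    (h : ∀ i ∈ U, ∀ j ∈ U, ∀ k ∈ U, ∀ l ∈ U, s i j * s k l - s i k * s j l + s i l * s j k = 0) :
    ∃ S : Finset D, S.card ≤ 2 * U.card - 3 ∧ ∃ m ∈ Algebra.adjoin ℂ (S : Set D), m ≠ 0 ∧
      ∀ i ∈ U, ∀ j ∈ U, s i j * m ∈ Algebra.adjoin ℂ (S : Set D) := by
  by_cases hzero : ∀ i ∈ U, ∀ j ∈ U, s i j = 0
  · refine ⟨∅, by simp, 1, one_mem _, one_ne_zero, fun i hi j hj ↦ ?_⟩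
    rw [hzero i hi j hj, zero_mul]
    exact zero_mem _
  push Not at hzero
  obtain ⟨p, hp, q, hq, hne⟩ := hzero
  have hpq : p ≠ q := by
    rintro rfl
    exact hne (hself p)
  obtain ⟨S, hS, hm, hmem⟩ := exists_finset_of_pivot hself hswap hp hq hpq fun i hi j hj _ ↦
    .inl (by linear_combination h i hi j hj p hp q hq)
  exact ⟨S, hS, _, hm, hne, hmem⟩

theorem exists_finset_of_block_relations [IsDomain D] {c d : ℕ} (hc : 2 < c) (hd : 2 < d)
    {s : Fin (c + d) → Fin (c + d) → D} (hself : ∀ i, s i i = 0) (hswap : ∀ i j, s j i = -s i j)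
    (hbinom : ∀ i j k l, i < j → j < k → k < l → j.val < c ∧ c ≤ k.val →
      s i k * s j l = s i l * s j k)
    (htrinom : ∀ i j k l, i < j → j < k → k < l → ¬(j.val < c ∧ c ≤ k.val) →
      s i j * s k l - s i k * s j l + s i l * s j k = 0) :
    ∃ S : Finset D, S.card ≤ 2 * (c + d) - 3 ∧ ∃ m ∈ Algebra.adjoin ℂ (S : Set D), m ≠ 0 ∧
      ∀ i j, s i j * m ∈ Algebra.adjoin ℂ (S : Set D) := by
  classical
  have hplucker := plucker_of_sorted hself hswap htrinom
  by_cases hzero : ∀ p q : Fin (c + d), p.val < c → c ≤ q.val → s p q = 0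
  · let A : Finset (Fin (c + d)) := Finset.univ.filter (·.val < c)
    have hA : A.card = c := by
      rw [Fin.card_filter_val_lt]
      omega
    have hAc : Aᶜ.card = d := by
      rw [Finset.card_compl, hA, Fintype.card_fin]
      omega
    have mem_A {i} : i ∈ A ↔ i.val < c := by simp [A]
    have mem_Ac {i} : i ∈ Aᶜ ↔ ¬i.val < c := by simp [A]
    obtain ⟨S, hS, m, hm, hm₀, hmem⟩ := exists_finset_of_plucker hself hswap A
      fun i hi j hj k hk l hl ↦ hplucker i j k l (by
        rw [mem_A] at hi hj hk hl
        simp [hi, hj, hk, hl])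
    obtain ⟨S', hS', m', hm', hm₀', hmem'⟩ := exists_finset_of_plucker hself hswap Aᶜ
      fun i hi j hj k hk l hl ↦ hplucker i j k l (by
        rw [mem_Ac] at hi hj hk hl
        simp [hi, hj, hk, hl])
    have hle : Algebra.adjoin ℂ (S : Set D) ≤ Algebra.adjoin ℂ ((S ∪ S' : Finset D) : Set D) :=
      Algebra.adjoin_mono (by simp)
    have hle' : Algebra.adjoin ℂ (S' : Set D) ≤ Algebra.adjoin ℂ ((S ∪ S' : Finset D) : Set D) :=
      Algebra.adjoin_mono (by simp)
    refine ⟨S ∪ S', ?_, m * m', mul_mem (hle hm) (hle' hm'), mul_ne_zero hm₀ hm₀', fun i j ↦ ?_⟩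
    · have := Finset.card_union_le S S'
      omega
    by_cases hi : i.val < c
    · by_cases hj : j.val < c
      · rw [← mul_assoc]
        exact mul_mem (hle (hmem i (mem_A.2 hi) j (mem_A.2 hj))) (hle' hm')
      · rw [hzero i j hi (by omega), zero_mul]
        exact zero_mem _
    · by_cases hj : j.val < c
      · rw [hswap j i, hzero j i hj (by omega), neg_zero, zero_mul]
        exact zero_mem _
      · rw [mul_comm m, ← mul_assoc]
        exact mul_mem (hle' (hmem' i (mem_Ac.2 hi) j (mem_Ac.2 hj))) (hle hm)
  · push Not at hzero
    obtain ⟨p, q, hp, hq, hne⟩ := hzero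
    have hpq : p ≠ q := by
      rintro rfl
      omega
    obtain ⟨S, hS, hm, hmem⟩ := exists_finset_of_pivot hself hswap (Finset.mem_univ p)
      (Finset.mem_univ q) hpq fun i _ j _ hij ↦ by
        by_cases hi : i.val < c
        · by_cases hj : j.val < c
          · left
            linear_combination hplucker i j p q (by
              rw [if_pos hi, if_pos hj, if_pos hp, if_neg (by omega)]
              norm_num)
          · exact .inr (rank_one_of_sorted hbinom hi hp (by omega) hq)
        · left
          linear_combination hplucker i j p q (by
            rw [if_neg hi, if_neg (by omega), if_pos hp, if_neg (by omega)]
            norm_num)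
    exact ⟨S, by simpa using hS, _, hm, hne,
      fun i j ↦ hmem i (Finset.mem_univ i) j (Finset.mem_univ j)⟩

end Skew

theorem trdeg_quotient_le {c d : ℕ} (hc : 2 < c) (hd : 2 < d) {D : Type*} [CommRing D] [IsDomain D]
    [Algebra ℂ D] (φ : MvPolynomial (Idx (c + d)) ℂ →ₐ[ℂ] D) (hφ : Function.Surjective φ)
    (hJ : ∀ P ∈ JGens c (c + d), φ P = 0) :
    Algebra.trdeg ℂ D ≤ (2 * (c + d) - 3 : ℕ) := by
  let s := skewExt fun p ↦ φ (X (.inl p))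
  have hs {i j} (h : i < j) : s i j = φ (W i j h) := skewExt_of_lt _ h
  obtain ⟨S, hS, m, hm, hm₀, hmem⟩ := exists_finset_of_block_relations hc hd (s := s)
    (skewExt_self _) (skewExt_swap _)
    (fun i j k l hij hjk hkl h ↦ by
      have := hJ _ (.inr ⟨i, j, k, l, hij, hjk, hkl, .inl ⟨h, rfl⟩⟩)
      simp only [map_add, map_mul, map_neg] at this
      rw [hs (hij.trans hjk), hs (hjk.trans hkl), hs (hij.trans (hjk.trans hkl)), hs hjk]
      linear_combination -this)
    (fun i j k l hij hjk hkl h ↦ by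
      have := hJ _ (.inr ⟨i, j, k, l, hij, hjk, hkl, .inr ⟨h, rfl⟩⟩)
      simp only [map_add, map_mul, map_sub] at this
      rw [hs hij, hs hkl, hs (hij.trans hjk), hs (hjk.trans hkl),
        hs (hij.trans (hjk.trans hkl)), hs hjk]
      exact this)
  have halg (i j) : IsAlgebraic (Algebra.adjoin ℂ (S : Set D)) (s i j) := by
    refine IsAlgebraic.of_mul (mem_nonZeroDivisors_of_ne_zero hm₀)
      (isAlgebraic_algebraMap (⟨m, hm⟩ : Algebra.adjoin ℂ (S : Set D))) ?_
    rw [mul_comm]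
    exact isAlgebraic_algebraMap (⟨_, hmem i j⟩ : Algebra.adjoin ℂ (S : Set D))
  have : Algebra.IsAlgebraic (Algebra.adjoin ℂ (S : Set D)) D := by
    refine ⟨fun z ↦ ?_⟩
    obtain ⟨P, rfl⟩ := hφ z
    induction P using MvPolynomial.induction_on with
    | C a =>
      rw [← algebraMap_eq, AlgHom.commutes,
        IsScalarTower.algebraMap_apply ℂ (Algebra.adjoin ℂ (S : Set D))]
      exact isAlgebraic_algebraMap _
    | add P Q hP hQ =>
      rw [map_add]
      exact hP.add hQ
    | mul_X P i hP =>
      rw [map_mul]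
      refine hP.mul ?_
      rcases i with p | _
      · have h := halg p.1.1 p.1.2
        rwa [hs p.2] at h
      · have h : φ (X (.inr ())) = 0 := hJ _ (.inl rfl)
        rw [h]
        exact isAlgebraic_zero
  refine (Algebra.IsAlgebraic.trdeg_le_cardinalMk ℂ (S : Set D)).trans ?_
  simpa using hS

/-- For `c, d > 2` and `n = c + d`, the quotient of `ℂ[T_{ij}, T_∞]` by the ideal `J`
has Krull dimension `2(c + d) - 3`. -/
theorem stmt_8 (c d : ℕ) (hc : 2 < c) (hd : 2 < d) :
    ringKrullDim (MvPolynomial (Idx (c + d)) ℂ ⧸ Ideal.span (JGens c (c + d))) =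
      (2 * (c + d) - 3 : ℕ) := by
  refine le_antisymm (ringKrullDim_le_of_trdeg_quotient_le (k := ℂ) _ fun P hP ↦ ?_)
    (le_ringKrullDim_quotient_JGens hc hd)
  refine trdeg_quotient_le hc hd
    ((Ideal.Quotient.mkₐ ℂ P).comp (Ideal.Quotient.mkₐ ℂ (Ideal.span (JGens c (c + d)))))
    ((Ideal.Quotient.mkₐ_surjective ℂ P).comp (Ideal.Quotient.mkₐ_surjective ℂ _)) fun Q hQ ↦ ?_
  have h : Ideal.Quotient.mkₐ ℂ (Ideal.span (JGens c (c + d))) Q = 0 :=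
    Ideal.Quotient.eq_zero_iff_mem.2 (Ideal.subset_span hQ)
  rw [AlgHom.comp_apply, h, map_zero]
end

section
/- Let c, d > 2 and n = c + d. The quotient R = ℂ[T_{ij}, T_∞]/I (with I as above) is a unique factorization domain; in particular R is a normal integral domain. -/
open MvPolynomial

/-- **Nagata's criterion**, for a prime `x` of a Noetherian domain `R` such that `R[x⁻¹]` is
covered by a factorial subring `P` containing `x`. -/
theorem uniqueFactorizationMonoid_of_prime_of_clears {P R : Type*} [CommRing P] [IsDomain P]
    [UniqueFactorizationMonoid P] [CommRing R] [IsDomain R] [IsNoetherianRing R]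
    (φ : P →+* R) (hφ : Function.Injective φ) (x : P) (hx : Prime (φ x))
    (hclear : ∀ f : R, ∃ (m : ℕ) (p : P), φ x ^ m * f = φ p) :
    UniqueFactorizationMonoid R := by
  rw [UniqueFactorizationMonoid.iff_exists_prime_mem_of_isPrime]
  intro I hI hIp
  by_cases hxI : φ x ∈ I
  · exact ⟨φ x, hxI, hx⟩
  have hcomap : I.comap φ ≠ ⊥ := by
    obtain ⟨f, hfI, hf0⟩ := Submodule.exists_mem_ne_zero_of_ne_bot hI
    obtain ⟨m, p, hp⟩ := hclear f
    have hpI : p ∈ I.comap φ := by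
      rw [Ideal.mem_comap, ← hp]
      exact I.mul_mem_left _ hfI
    intro h
    rw [h, Ideal.mem_bot] at hpI
    rw [hpI, map_zero] at hp
    exact mul_ne_zero (pow_ne_zero m hx.ne_zero) hf0 hp
  obtain ⟨p, hpI, hp⟩ :=
    UniqueFactorizationMonoid.iff_exists_prime_mem_of_isPrime.mp ‹_› (I.comap φ) hcomap
      (Ideal.comap_isPrime φ I)
  have hpI' : φ p ∈ I := hpI
  have hp0 : φ p ≠ 0 := fun h => hp.ne_zero (hφ (by rw [h, map_zero]))
  obtain ⟨q, hpq, hxq⟩ :=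
    (FiniteMultiplicity.of_not_isUnit hx.not_isUnit hp0).exists_eq_pow_mul_and_not_dvd
  set k := multiplicity (φ x) (φ p)
  have hqI : q ∈ I :=
    (hIp.mem_or_mem (hpq ▸ hpI')).resolve_left fun h => hxI (hIp.mem_of_pow_mem _ h)
  have hpx : ¬ p ∣ x := fun ⟨y, hy⟩ => hxI (by rw [hy, map_mul]; exact I.mul_mem_right _ hpI')
  have key : ∀ (N : ℕ) (a : R) (a' : P), φ x ^ N * a = φ a' → p ∣ a' → q ∣ a := by
    rintro N a a' ha ⟨y, rfl⟩
    have h1 : φ x ^ N * a = q * (φ x ^ k * φ y) := by rw [ha, map_mul, hpq]; ring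
    obtain ⟨z, hz⟩ := hx.pow_dvd_of_dvd_mul_left N hxq ⟨a, h1.symm⟩
    refine ⟨z, mul_left_cancel₀ (pow_ne_zero N hx.ne_zero) ?_⟩
    rw [h1, hz]; ring
  refine ⟨q, hqI, fun h => hp0 (by rw [hpq, h, mul_zero]),
    fun h => hIp.ne_top (Ideal.eq_top_of_isUnit_mem _ hqI h), ?_⟩
  rintro a b ⟨e, he⟩
  obtain ⟨Na, a', ha⟩ := hclear a
  obtain ⟨Nb, b', hb⟩ := hclear b
  obtain ⟨Ne, e', he'⟩ := hclear e
  have hP : x ^ (k + Ne) * (a' * b') = p * (x ^ (Na + Nb) * e') := by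
    apply hφ
    simp only [map_mul, map_pow, ← ha, ← hb, ← he', hpq]
    linear_combination φ x ^ (k + Ne + Na + Nb) * he
  rcases hp.dvd_or_dvd (Dvd.intro _ hP.symm) with h | h
  · exact absurd (hp.dvd_of_dvd_pow h) hpx
  · exact (hp.dvd_or_dvd h).imp (key Na a a' ha) (key Nb b b' hb)

open scoped MonomialOrder in
/-- An algebra homomorphism is injective on polynomials supported in `S` if it sends the monomials
in `S` to nonzero polynomials with pairwise distinct leading exponents. -/
theorem MonomialOrder.eq_zero_of_map_eq_zero {σ τ k : Type*} [Field k] (m : MonomialOrder τ)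
    (Φ : MvPolynomial σ k →ₐ[k] MvPolynomial τ k) (S : Set (σ →₀ ℕ))
    (h0 : ∀ e ∈ S, Φ (monomial e 1) ≠ 0)
    (hinj : S.InjOn fun e => m.degree (Φ (monomial e 1)))
    (f : MvPolynomial σ k) (hf : (f.support : Set (σ →₀ ℕ)) ⊆ S) (hΦ : Φ f = 0) : f = 0 := by
  by_contra hne
  obtain ⟨e₀, he₀, hmax⟩ := Finset.exists_max_image f.support
    (fun e => m.toSyn (m.degree (Φ (monomial e 1)))) (support_nonempty.mpr hne)
  have hsum : Φ f = ∑ e ∈ f.support, C (coeff e f) * Φ (monomial e 1) := by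
    conv_lhs => rw [f.as_sum, map_sum]
    refine Finset.sum_congr rfl fun e _ => ?_
    rw [← mul_one (coeff e f), ← C_mul_monomial, map_mul, ← algebraMap_eq, Φ.commutes,
      mul_one, algebraMap_eq]
  have hc := congrArg (coeff (m.degree (Φ (monomial e₀ 1)))) (hsum.symm.trans hΦ)
  rw [coeff_sum, coeff_zero, Finset.sum_eq_single e₀] at hc
  · rw [coeff_C_mul, mul_eq_zero] at hc
    exact hc.elim (mem_support_iff.mp he₀)
      (m.coeff_degree_ne_zero_iff.mpr (h0 e₀ (hf he₀)))
  · intro e he hee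
    rw [coeff_C_mul, m.coeff_eq_zero_of_lt, mul_zero]
    refine lt_of_le_of_ne (hmax e he) fun h => hee ?_
    exact hinj (hf he) (hf he₀) (m.toSyn.injective h)
  · exact fun h => absurd he₀ h

theorem MonomialOrder.degree_aeval_monomial {σ τ k : Type*} [Field k] (m : MonomialOrder τ)
    (g : σ → MvPolynomial τ k) (w : σ → τ →₀ ℕ) (e : σ →₀ ℕ)
    (hg : ∀ i ∈ e.support, g i ≠ 0 ∧ m.degree (g i) = w i) :
    aeval g (monomial e (1 : k)) ≠ 0 ∧
      m.degree (aeval g (monomial e (1 : k))) = Finsupp.weight w e := by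
  rw [aeval_monomial, map_one, one_mul, Finsupp.prod]
  refine ⟨Finset.prod_ne_zero_iff.mpr fun i hi => pow_ne_zero _ (hg i hi).1, ?_⟩
  rw [m.degree_prod fun i hi => pow_ne_zero _ (hg i hi).1, Finsupp.weight_apply, Finsupp.sum]
  exact Finset.sum_congr rfl fun i hi => by rw [m.degree_pow, (hg i hi).2]

theorem Finsupp.weight_apply_ne_zero_iff {σ τ : Type*} (w : σ → τ →₀ ℕ) (e : σ →₀ ℕ) (y : τ) :
    Finsupp.weight w e y ≠ 0 ↔ ∃ i, e i ≠ 0 ∧ w i y ≠ 0 := by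
  simp [Finsupp.weight_apply, Finsupp.sum, Finsupp.finsetSum_apply, Finset.sum_eq_zero_iff]

/-- The exponents of monomials in which no two variables `T_{ik}`, `T_{jl}` with `i < j < k < l`
occur together. -/
def NonCrossing {n : ℕ} (e : Idx n →₀ ℕ) : Prop :=
  ∀ (i j k l : Fin n) (hij : i < j) (hjk : j < k) (hkl : k < l),
    e (Sum.inl ⟨(i, k), hij.trans hjk⟩) = 0 ∨ e (Sum.inl ⟨(j, l), hjk.trans hkl⟩) = 0

theorem NonCrossing.mono {n : ℕ} {e e' : Idx n →₀ ℕ} (he : NonCrossing e) (h : e' ≤ e) :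
    NonCrossing e' := fun i j k l hij hjk hkl =>
  (he i j k l hij hjk hkl).imp (fun h0 => Nat.le_zero.mp ((h _).trans h0.le))
    (fun h0 => Nat.le_zero.mp ((h _).trans h0.le))

/-- Index set for the entries `a_i`, `b_i` of generic vectors in the plane and a parameter `t`. The
lexicographic order satisfies `b_{n-1} > ⋯ > b_0 > a_0 > ⋯ > a_{n-1} > t`. -/
abbrev VecIdx (n : ℕ) := (Fin n)ᵒᵈ ⊕ₗ WithTop (Fin n)

namespace VecIdx

variable {n : ℕ}

/-- The index of `a_i`. -/
def fst (i : Fin n) : VecIdx n := toLex (Sum.inr (i : WithTop (Fin n)))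

/-- The index of `b_i`. -/
def snd (i : Fin n) : VecIdx n := toLex (Sum.inl (OrderDual.toDual i))

/-- The index of `t`. -/
def param : VecIdx n := toLex (Sum.inr ⊤)

@[simp] theorem fst_inj {i j : Fin n} : fst i = fst j ↔ i = j := by simp [fst]
@[simp] theorem snd_inj {i j : Fin n} : snd i = snd j ↔ i = j := by simp [snd]
@[simp] theorem fst_ne_snd {i j : Fin n} : fst i ≠ snd j := by simp [fst, snd]
@[simp] theorem snd_ne_fst {i j : Fin n} : snd i ≠ fst j := by simp [fst, snd]
@[simp] theorem fst_ne_param {i : Fin n} : fst i ≠ param := fun h =>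
  WithTop.coe_ne_top (Sum.inr.inj (toLex.injective h))
@[simp] theorem param_ne_fst {i : Fin n} : param ≠ fst i := fst_ne_param.symm
@[simp] theorem snd_ne_param {i : Fin n} : snd i ≠ param := fun h =>
  Sum.inl_ne_inr (toLex.injective h)
@[simp] theorem param_ne_snd {i : Fin n} : param ≠ snd i := snd_ne_param.symm

theorem snd_lt_snd {i j : Fin n} (h : i < j) : snd j < snd i :=
  Sum.Lex.inl_lt_inl_iff.mpr (OrderDual.toDual_lt_toDual.mpr h)

theorem snd_lt_fst (i j : Fin n) : snd j < fst i := Sum.Lex.inl_lt_inr _ _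

end VecIdx

open VecIdx Finsupp

/-- The exponent of the leading monomial of the image of a variable under `genericMap`. -/
noncomputable def leadExp (c : ℕ) {n : ℕ} (o z : Fin n) : Idx n → VecIdx n →₀ ℕ :=
  Sum.elim
    (fun p => (if p.1.2.val < c then 0 else single param 1) +
      if p.1.2 = z then single (if p.1.1 = o then fst o else fst z) 1 + single (snd p.1.1) 1
      else single (fst p.1.1) 1 + single (snd p.1.2) 1)
    (fun _ => single param 1)

section NonCrossing

variable {c n : ℕ} {o z : Fin n}

theorem weight_leadExp_snd_ne_zero_iff (e : Idx n →₀ ℕ) (y : Fin n) :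
    weight (leadExp c o z) e (snd y) ≠ 0 ↔
      ∃ p : PIdx n, e (Sum.inl p) ≠ 0 ∧ if p.1.2 = z then p.1.1 = y else p.1.2 = y := by
  rw [weight_apply_ne_zero_iff]
  have h : ∀ p : PIdx n, leadExp c o z (Sum.inl p) (snd y) ≠ 0 ↔
      if p.1.2 = z then p.1.1 = y else p.1.2 = y := by
    intro p
    simp only [leadExp, Sum.elim_inl]
    split_ifs <;> simp [single_apply]
  constructor
  · rintro ⟨p | u, hp, hy⟩
    · exact ⟨p, hp, (h p).mp hy⟩
    · simp [leadExp] at hy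
  · rintro ⟨p, hp, hy⟩
    exact ⟨_, hp, (h p).mpr hy⟩

theorem weight_leadExp_fst_ne_zero_iff (e : Idx n →₀ ℕ) {y : Fin n} (hyz : y ≠ z) :
    weight (leadExp c o z) e (fst y) ≠ 0 ↔
      ∃ p : PIdx n, e (Sum.inl p) ≠ 0 ∧
        if p.1.2 = z then p.1.1 = o ∧ o = y else p.1.1 = y := by
  rw [weight_apply_ne_zero_iff]
  have h : ∀ p : PIdx n, leadExp c o z (Sum.inl p) (fst y) ≠ 0 ↔
      if p.1.2 = z then p.1.1 = o ∧ o = y else p.1.1 = y := by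
    intro p
    simp only [leadExp, Sum.elim_inl]
    split_ifs <;> simp [single_apply, *]
  constructor
  · rintro ⟨p | u, hp, hy⟩
    · exact ⟨p, hp, (h p).mp hy⟩
    · simp [leadExp] at hy
  · rintro ⟨p, hp, hy⟩
    exact ⟨_, hp, (h p).mpr hy⟩

/-- In a non-crossing configuration the first closing vertex `j` is joined to the last opening
vertex `i` before it. -/
theorem NonCrossing.apply_ne_zero_of_last_opening (hz : ∀ i, i ≤ z) (ho : ∀ i, o ≤ i)
    {e : Idx n →₀ ℕ} (he : NonCrossing e) {i j : Fin n} (hij : i < j)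
    (hj : weight (leadExp c o z) e (snd j) ≠ 0)
    (hmin : ∀ y < j, weight (leadExp c o z) e (snd y) = 0)
    (hi : weight (leadExp c o z) e (fst i) ≠ 0)
    (hmax : ∀ y, i < y → y < j → weight (leadExp c o z) e (fst y) = 0) :
    e (Sum.inl ⟨(i, j), hij⟩) ≠ 0 := by
  have hiz : i ≠ z := (hij.trans_le (hz j)).ne
  obtain ⟨⟨⟨i', l⟩, hil⟩, hp, h⟩ := (weight_leadExp_fst_ne_zero_iff e hiz).mp hi
  have hl := (weight_leadExp_snd_ne_zero_iff (c := c) (o := o) (z := z) e l).mpr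
  dsimp only at hil h hl
  split_ifs at h with hlz
  · obtain ⟨rfl, rfl⟩ := h
    exact absurd (hmin i' hij)
      ((weight_leadExp_snd_ne_zero_iff e i').mpr ⟨⟨(i', l), hil⟩, hp, by simp [hlz]⟩)
  subst h
  have hjl : j ≤ l := by
    by_contra! hlj
    exact hl ⟨⟨(i', l), hil⟩, hp, by simp [hlz]⟩ (hmin l hlj)
  rcases hjl.eq_or_lt with rfl | hjl
  · exact hp
  obtain ⟨⟨⟨k, m⟩, hkm⟩, hq, h⟩ := (weight_leadExp_snd_ne_zero_iff e j).mp hj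
  dsimp only at hkm h
  split_ifs at h with hmz
  · subst h hmz
    exact absurd (he i' k l m hij hjl (lt_of_le_of_ne (hz l) hlz)) (by simp [hp, hq])
  · subst h
    have hk : weight (leadExp c o z) e (fst k) ≠ 0 :=
      (weight_leadExp_fst_ne_zero_iff e (hkm.trans_le (hz _)).ne).mpr
        ⟨⟨(k, m), hkm⟩, hq, by simp [hmz]⟩
    rcases lt_trichotomy k i' with hki | rfl | hki
    · exact absurd (he k i' m l hki hij hjl) (by simp [hp, hq])
    · exact hq
    · exact absurd (hmax k hki hkm) hk

theorem apply_ne_zero_of_no_opening (hz : ∀ i, i ≤ z)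
    {e : Idx n →₀ ℕ} {j : Fin n} (hjz : j < z)
    (hj : weight (leadExp c o z) e (snd j) ≠ 0)
    (hno : ∀ y < j, weight (leadExp c o z) e (fst y) = 0) :
    e (Sum.inl ⟨(j, z), hjz⟩) ≠ 0 := by
  obtain ⟨⟨⟨k, m⟩, hkm⟩, hq, h⟩ := (weight_leadExp_snd_ne_zero_iff e j).mp hj
  dsimp only at hkm h
  split_ifs at h with hmz
  · subst h hmz
    exact hq
  · subst h
    exact absurd (hno k hkm) ((weight_leadExp_fst_ne_zero_iff e (hkm.trans_le (hz _)).ne).mpr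
      ⟨⟨(k, m), hkm⟩, hq, by simp [hmz]⟩)

theorem NonCrossing.exists_common (hz : ∀ i, i ≤ z) (ho : ∀ i, o ≤ i)
    {e e' : Idx n →₀ ℕ} (he : NonCrossing e) (he' : NonCrossing e')
    (h : weight (leadExp c o z) e = weight (leadExp c o z) e')
    {y : Fin n} (hy : weight (leadExp c o z) e (snd y) ≠ 0) :
    ∃ p : PIdx n, e (Sum.inl p) ≠ 0 ∧ e' (Sum.inl p) ≠ 0 := by
  obtain ⟨j, hj, hmin⟩ := (wellFounded_lt (α := Fin n)).has_min
    {y | weight (leadExp c o z) e (snd y) ≠ 0} ⟨y, hy⟩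
  have hmin : ∀ y < j, weight (leadExp c o z) e (snd y) = 0 := fun y hyj => by
    by_contra hne
    exact hmin y hne hyj
  have hjz : j < z := by
    obtain ⟨⟨⟨k, m⟩, hkm⟩, -, hm⟩ := (weight_leadExp_snd_ne_zero_iff e j).mp hj
    dsimp only at hkm hm
    split_ifs at hm with hmz
    · exact hm ▸ hmz ▸ hkm
    · exact lt_of_le_of_ne (hz j) (hm ▸ hmz)
  by_cases hex : ∃ i, i < j ∧ weight (leadExp c o z) e (fst i) ≠ 0
  · obtain ⟨i, ⟨hij, hi⟩, hmax⟩ := (wellFounded_gt (α := Fin n)).has_min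
      {i | i < j ∧ weight (leadExp c o z) e (fst i) ≠ 0} hex
    have hmax : ∀ y, i < y → y < j → weight (leadExp c o z) e (fst y) = 0 := fun y hiy hyj => by
      by_contra hne
      exact hmax y ⟨hyj, hne⟩ hiy
    exact ⟨_, he.apply_ne_zero_of_last_opening hz ho hij hj hmin hi hmax,
      he'.apply_ne_zero_of_last_opening hz ho hij (h ▸ hj) (h ▸ hmin) (h ▸ hi) (h ▸ hmax)⟩
  · push Not at hex
    exact ⟨_, apply_ne_zero_of_no_opening hz hjz hj hex,
      apply_ne_zero_of_no_opening hz hjz (h ▸ hj) (h ▸ hex)⟩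

theorem eq_single_of_weight_leadExp_snd_eq_zero {e : Idx n →₀ ℕ}
    (h : ∀ y, weight (leadExp c o z) e (snd y) = 0) :
    e = single (Sum.inr ()) (weight (leadExp c o z) e param) := by
  have h0 : ∀ p, e (Sum.inl p) = 0 := fun p => by
    by_contra hp
    by_cases hpz : p.1.2 = z
    · exact (weight_leadExp_snd_ne_zero_iff e p.1.1).mpr ⟨p, hp, by simp [hpz]⟩ (h _)
    · exact (weight_leadExp_snd_ne_zero_iff e p.1.2).mpr ⟨p, hp, by simp [hpz]⟩ (h _)
  have he : e = single (Sum.inr ()) (e (Sum.inr ())) := by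
    ext (p | u)
    · simp [h0 p]
    · simp
  rw [he, weight_single]
  simp [leadExp]

theorem NonCrossing.eq_of_weight_leadExp_eq (hz : ∀ i, i ≤ z) (ho : ∀ i, o ≤ i)
    {e e' : Idx n →₀ ℕ} (he : NonCrossing e) (he' : NonCrossing e')
    (h : weight (leadExp c o z) e = weight (leadExp c o z) e') : e = e' := by
  induction hN : e.degree generalizing e e' with
  | zero =>
    obtain rfl : e = 0 := (degree_eq_zero_iff e).mp hN
    have h0 : ∀ y, weight (leadExp c o z) e' (snd y) = 0 := fun y => by simp [← h]
    rw [eq_single_of_weight_leadExp_snd_eq_zero h0, ← h]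
    simp
  | succ N ih =>
    by_cases hy : ∃ y, weight (leadExp c o z) e (snd y) ≠ 0
    · obtain ⟨y, hy⟩ := hy
      obtain ⟨p, hp, hp'⟩ := he.exists_common hz ho he' h hy
      obtain ⟨f, rfl⟩ := exists_add_of_le
        (single_le_iff.mpr (Nat.one_le_iff_ne_zero.mpr hp))
      obtain ⟨f', rfl⟩ := exists_add_of_le
        (single_le_iff.mpr (Nat.one_le_iff_ne_zero.mpr hp'))
      rw [map_add, map_add, add_right_inj] at h
      rw [ih (he.mono le_add_self) (he'.mono le_add_self) h]
      rw [map_add, degree_single] at hN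
      omega
    · push Not at hy
      rw [eq_single_of_weight_leadExp_snd_eq_zero hy,
        eq_single_of_weight_leadExp_snd_eq_zero (e := e') (h ▸ hy), h]

end NonCrossing

/-- The relations of `IGens` hold for the `2 × 2` minors of a family of plane vectors
`(a_i, b_i)`, once the minors with larger index beyond `c` are multiplied by the value `t`
of `T_∞`. -/
noncomputable def minorMap {A : Type*} [CommRing A] [Algebra ℂ A] (c : ℕ) {n : ℕ} (t : A)
    (a b : Fin n → A) : MvPolynomial (Idx n) ℂ →ₐ[ℂ] A :=
  aeval (Sum.elim
    (fun p : PIdx n =>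
      (if p.1.2.val < c then 1 else t) * (a p.1.1 * b p.1.2 - a p.1.2 * b p.1.1))
    (fun _ => t))

section minorMap

variable {A : Type*} [CommRing A] [Algebra ℂ A] {c n : ℕ} (t : A) (a b : Fin n → A)

theorem minorMap_W {i j : Fin n} (h : i < j) :
    minorMap c t a b (W i j h) = (if j.val < c then 1 else t) * (a i * b j - a j * b i) := by
  simp [minorMap, W]

theorem minorMap_Tinf : minorMap c t a b Tinf = t := by
  simp [minorMap, Tinf]

theorem minorMap_eq_zero_of_mem {f : MvPolynomial (Idx n) ℂ}
    (hf : f ∈ Ideal.span (IGens c n)) : minorMap c t a b f = 0 := by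
  suffices h : Ideal.span (IGens c n) ≤ RingHom.ker (minorMap c t a b) from h hf
  rw [Ideal.span_le]
  rintro f ⟨i, j, k, l, hij, hjk, hkl, ⟨⟨hj, hk⟩, rfl⟩ | ⟨hjk', rfl⟩⟩
  · simp only [SetLike.mem_coe, RingHom.mem_ker, map_add, map_sub, map_mul, minorMap_W,
      minorMap_Tinf, if_pos hj, if_neg hk.not_gt, if_neg (hk.trans hkl.le).not_gt]
    ring
  · simp only [SetLike.mem_coe, RingHom.mem_ker, map_add, map_sub, map_mul, minorMap_W]
    rw [Fin.lt_def] at hjk hkl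
    split_ifs <;> first | omega | ring

end minorMap

/-- The length of a chord of the `n`-gon for which crossing chords are longer than uncrossed
ones. -/
def chordLength {n : ℕ} : Idx n → ℕ :=
  Sum.elim (fun p => (p.1.2.val - p.1.1.val) * (n - (p.1.2.val - p.1.1.val))) (fun _ => 0)

theorem chordLength_lt {n : ℕ} {i j k l : Fin n} (hij : i < j) (hjk : j < k) (hkl : k < l) :
    chordLength (Sum.inl ⟨(i, j), hij⟩) + chordLength (Sum.inl ⟨(k, l), hkl⟩) <
      chordLength (Sum.inl ⟨(i, k), hij.trans hjk⟩) +
        chordLength (Sum.inl ⟨(j, l), hjk.trans hkl⟩) ∧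
    chordLength (Sum.inl ⟨(i, l), hij.trans (hjk.trans hkl)⟩) +
        chordLength (Sum.inl ⟨(j, k), hjk⟩) <
      chordLength (Sum.inl ⟨(i, k), hij.trans hjk⟩) +
        chordLength (Sum.inl ⟨(j, l), hjk.trans hkl⟩) := by
  obtain ⟨i, hi⟩ := i
  obtain ⟨j, hj⟩ := j
  obtain ⟨k, hk⟩ := k
  obtain ⟨l, hl⟩ := l
  simp only [Fin.mk_lt_mk] at hij hjk hkl
  simp only [chordLength, Sum.elim_inl]
  zify [show i ≤ j by omega, show k ≤ l by omega, show i ≤ k by omega, show j ≤ l by omega,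
    show i ≤ l by omega, show j ≤ k by omega, show j - i ≤ n by omega, show l - k ≤ n by omega,
    show k - i ≤ n by omega, show l - j ≤ n by omega, show l - i ≤ n by omega,
    show k - j ≤ n by omega]
  have h1 : (0 : ℤ) < j - i := by omega
  have h2 : (0 : ℤ) < k - j := by omega
  have h3 : (0 : ℤ) < l - k := by omega
  have h4 : (0 : ℤ) < n - (l - i) := by omega
  constructor
  · nlinarith [mul_pos h2 h4]
  · nlinarith [mul_pos h1 h3]

/-- Every monomial is a combination of non-crossing ones modulo the ideal `I`. -/
theorem monomial_mem_nonCrossing_sup (c : ℕ) {n : ℕ} (e : Idx n →₀ ℕ) :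
    monomial e (1 : ℂ) ∈ restrictSupport ℂ {e | NonCrossing e} ⊔
      (Ideal.span (IGens c n)).restrictScalars ℂ := by
  induction hN : weight chordLength e using Nat.strong_induction_on generalizing e with
  | _ N ih =>
  by_cases he : NonCrossing e
  · exact Submodule.mem_sup_left ((monomial_mem_restrictSupport ℂ).mpr (Or.inl he))
  simp only [NonCrossing, not_forall, not_or] at he
  obtain ⟨i, j, k, l, hij, hjk, hkl, h1, h2⟩ := he
  obtain ⟨f, rfl⟩ : ∃ f, e = single (Sum.inl ⟨(i, k), hij.trans hjk⟩) 1 +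
      single (Sum.inl ⟨(j, l), hjk.trans hkl⟩) 1 + f := by
    apply exists_add_of_le
    intro q
    have hne : (Sum.inl ⟨(i, k), hij.trans hjk⟩ : Idx n) ≠ Sum.inl ⟨(j, l), hjk.trans hkl⟩ := by
      simp [hij.ne]
    rw [Finsupp.add_apply, single_apply, single_apply]
    split_ifs with hq hq' hq' <;> grind
  obtain ⟨u, hu0, hu⟩ : ∃ u : Idx n →₀ ℕ, weight chordLength u = 0 ∧
      monomial u (1 : ℂ) * W i j hij * W k l hkl - W i k (hij.trans hjk) * W j l (hjk.trans hkl)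
        + W i l (hij.trans (hjk.trans hkl)) * W j k hjk ∈ IGens c n := by
    by_cases hc : j.val < c ∧ c ≤ k.val
    · exact ⟨single (Sum.inr ()) 1, by simp [weight_single, chordLength],
        i, j, k, l, hij, hjk, hkl, Or.inl ⟨hc, rfl⟩⟩
    · exact ⟨0, by simp, i, j, k, l, hij, hjk, hkl, Or.inr ⟨hc, by simp⟩⟩
  have hlen := chordLength_lt hij hjk hkl
  simp only [map_add, weight_single, one_smul] at hN
  have m1 := ih _ (by
    simp only [map_add, weight_single, one_smul, hu0]; omega)
    (u + single (Sum.inl ⟨(i, j), hij⟩) 1 + single (Sum.inl ⟨(k, l), hkl⟩) 1 + f) rfl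
  have m2 := ih _ (by
    simp only [map_add, weight_single, one_smul]; omega)
    (single (Sum.inl ⟨(i, l), hij.trans (hjk.trans hkl)⟩) 1 +
      single (Sum.inl ⟨(j, k), hjk⟩) 1 + f) rfl
  have m3 : (_ : MvPolynomial (Idx n) ℂ) ∈ restrictSupport ℂ {e | NonCrossing e} ⊔
      (Ideal.span (IGens c n)).restrictScalars ℂ := Submodule.mem_sup_right
    (Ideal.mul_mem_right (monomial f (1 : ℂ)) _ (Ideal.subset_span hu))
  convert sub_mem (add_mem m1 m2) m3 using 1
  have hmul : ∀ x y : Idx n →₀ ℕ, monomial (x + y) (1 : ℂ) = monomial x 1 * monomial y 1 := by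
    intro x y
    rw [monomial_mul, one_mul]
  simp only [hmul, W, X]
  ring

theorem mem_nonCrossing_sup (c : ℕ) {n : ℕ} (f : MvPolynomial (Idx n) ℂ) :
    f ∈ restrictSupport ℂ {e : Idx n →₀ ℕ | NonCrossing e} ⊔
      (Ideal.span (IGens c n)).restrictScalars ℂ := by
  rw [f.as_sum]
  refine sum_mem fun e _ => ?_
  rw [← mul_one (coeff e f), ← smul_eq_mul, ← smul_monomial]
  exact Submodule.smul_mem _ _ (monomial_mem_nonCrossing_sup c e)

/-- The parametrization of `R` by plane vectors `v_i = (a_i, b_i)` normalized so that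
`v_o = (a_o, 0)` and `v_z = (-a_z, ε)`; for `ε = 0` the variable `T_{oz}` is mapped to zero. -/
noncomputable def genericMap (c : ℕ) {n : ℕ} (o z : Fin n) (ε : MvPolynomial (VecIdx n) ℂ) :
    MvPolynomial (Idx n) ℂ →ₐ[ℂ] MvPolynomial (VecIdx n) ℂ :=
  minorMap c (X param) (fun i => if i = z then -X (fst z) else X (fst i))
    (fun i => if i = o then 0 else if i = z then ε else X (snd i))

theorem lex_single_add_single_lt {σ : Type*} [LinearOrder σ] [WellFoundedGT σ] {x y u v : σ}
    (hxy : x < y) (hxu : x < u) (hxv : x < v) :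
    MonomialOrder.lex.toSyn (single y 1 + single v 1) <
      MonomialOrder.lex.toSyn (single u 1 + single x 1) := by
  refine Finsupp.Lex.lt_iff.mpr ⟨x, fun d hd => ?_, ?_⟩
  · change (single y 1 + single v 1 : σ →₀ ℕ) d = (single u 1 + single x 1 : σ →₀ ℕ) d
    simp [(hd.trans hxy).ne', (hd.trans hxu).ne', (hd.trans hxv).ne', hd.ne']
  · change (single y 1 + single v 1 : σ →₀ ℕ) x < (single u 1 + single x 1 : σ →₀ ℕ) x
    simp [single_apply, hxy.ne', hxv.ne']

theorem MonomialOrder.degree_X_mul_X {σ k : Type*} [Field k] (m : MonomialOrder σ) (x y : σ) :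
    m.degree (X x * X y : MvPolynomial σ k) = single x 1 + single y 1 := by
  rw [m.degree_mul (X_ne_zero x) (X_ne_zero y), m.degree_X, m.degree_X]

theorem lex_degree_sub {σ k : Type*} [Field k] [LinearOrder σ] [WellFoundedGT σ] {x y u v : σ}
    (hxy : x < y) (hxu : x < u) (hxv : x < v) :
    (X u * X x - X v * X y : MvPolynomial σ k) ≠ 0 ∧
      MonomialOrder.lex.degree (X u * X x - X v * X y : MvPolynomial σ k) =
        single u 1 + single x 1 := by
  have hlt : MonomialOrder.lex.toSyn (MonomialOrder.lex.degree (X v * X y : MvPolynomial σ k)) <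
      MonomialOrder.lex.toSyn (MonomialOrder.lex.degree (X u * X x : MvPolynomial σ k)) := by
    rw [MonomialOrder.degree_X_mul_X, MonomialOrder.degree_X_mul_X, add_comm (single v 1)]
    exact lex_single_add_single_lt hxy hxu hxv
  refine ⟨fun h => ?_, ?_⟩
  · rw [sub_eq_zero.mp h] at hlt
    exact lt_irrefl _ hlt
  · rw [MonomialOrder.degree_sub_of_lt hlt, MonomialOrder.degree_X_mul_X]

section genericMap

variable {c n : ℕ} {o z : Fin n}

theorem degree_genericMap_X (hz : ∀ i, i ≤ z) (ho : ∀ i, o ≤ i) (hoz : o < z)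
    {ε : MvPolynomial (VecIdx n) ℂ} (hε : ε = -X (snd o) ∨ ε = 0) (q : Idx n)
    (hq : ε = 0 → q ≠ Sum.inl ⟨(o, z), hoz⟩) :
    genericMap c o z ε (X q) ≠ 0 ∧
      MonomialOrder.lex.degree (genericMap c o z ε (X q)) = leadExp c o z q := by
  rcases q with ⟨⟨i, j⟩, hij⟩ | ⟨⟩
  swap
  · have h : genericMap c o z ε (X (Sum.inr ())) = X param := minorMap_Tinf _ _ _
    rw [h]
    exact ⟨X_ne_zero _, MonomialOrder.degree_X⟩
  have h := minorMap_W (c := c) (X param : MvPolynomial (VecIdx n) ℂ)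
    (fun i => if i = z then -X (fst z) else X (fst i))
    (fun i => if i = o then 0 else if i = z then ε else X (snd i)) hij
  change genericMap c o z ε (X (Sum.inl ⟨(i, j), hij⟩)) = _ at h
  rw [h]
  dsimp only at hij
  have hiz : i ≠ z := (hij.trans_le (hz j)).ne
  have hjo : j ≠ o := ((ho i).trans_lt hij).ne'
  have hfac : (if j.val < c then 1 else X param : MvPolynomial (VecIdx n) ℂ) ≠ 0 ∧
      MonomialOrder.lex.degree (if j.val < c then 1 else X param : MvPolynomial (VecIdx n) ℂ) =
        if j.val < c then 0 else single param 1 := by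
    split_ifs
    · exact ⟨one_ne_zero, MonomialOrder.degree_one⟩
    · exact ⟨X_ne_zero _, MonomialOrder.degree_X⟩
  suffices hmain : ∀ g : MvPolynomial (VecIdx n) ℂ, ∀ d, (g ≠ 0 ∧ MonomialOrder.lex.degree g = d) →
      d = (if j = z then single (if i = o then fst o else fst z) 1 + single (snd i) 1
        else single (fst i) 1 + single (snd j) 1) →
      (if j.val < c then 1 else X param : MvPolynomial (VecIdx n) ℂ) * g ≠ 0 ∧
        MonomialOrder.lex.degree
          ((if j.val < c then 1 else X param : MvPolynomial (VecIdx n) ℂ) * g) =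
        leadExp c o z (Sum.inl ⟨(i, j), hij⟩) by
    simp only [if_neg hiz, if_neg hjo]
    by_cases hjz : j = z
    · subst hjz
      by_cases hio : i = o
      · subst hio
        rcases hε with rfl | rfl
        · simp only [if_true, mul_zero, sub_zero]
          refine hmain _ (single (fst i) 1 + single (snd i) 1)
            ⟨mul_ne_zero (X_ne_zero _) (neg_ne_zero.mpr (X_ne_zero _)), ?_⟩ (by simp)
          rw [mul_neg, MonomialOrder.degree_neg, MonomialOrder.degree_X_mul_X]
        · exact absurd rfl (hq rfl)
      · simp only [if_true, if_neg hio]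
        refine hmain _ (single (fst j) 1 + single (snd i) 1) ?_ (by simp [hio])
        rcases hε with rfl | rfl
        · have hoi : o < i := lt_of_le_of_ne (ho i) (Ne.symm hio)
          rw [show (X (fst i) * -X (snd o) - -X (fst j) * X (snd i) : MvPolynomial _ ℂ) =
            X (fst j) * X (snd i) - X (fst i) * X (snd o) by ring]
          exact lex_degree_sub (snd_lt_snd hoi) (snd_lt_fst _ _) (snd_lt_fst _ _)
        · rw [mul_zero, zero_sub, neg_mul, neg_neg]
          exact ⟨mul_ne_zero (X_ne_zero _) (X_ne_zero _), MonomialOrder.degree_X_mul_X _ _ _⟩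
    · simp only [if_neg hjz]
      refine hmain _ (single (fst i) 1 + single (snd j) 1) ?_ (if_neg hjz).symm
      by_cases hio : i = o
      · rw [if_pos hio, mul_zero, sub_zero]
        exact ⟨mul_ne_zero (X_ne_zero _) (X_ne_zero _), MonomialOrder.degree_X_mul_X _ _ _⟩
      · rw [if_neg hio]
        exact lex_degree_sub (snd_lt_snd hij) (snd_lt_fst _ _) (snd_lt_fst _ _)
  intro g d hg hd
  rw [MonomialOrder.degree_mul hfac.1 hg.1, hfac.2, hg.2, hd]
  exact ⟨mul_ne_zero hfac.1 hg.1, rfl⟩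

theorem eq_zero_of_genericMap_eq_zero (hz : ∀ i, i ≤ z) (ho : ∀ i, o ≤ i) (hoz : o < z)
    {ε : MvPolynomial (VecIdx n) ℂ} (hε : ε = -X (snd o) ∨ ε = 0) {f : MvPolynomial (Idx n) ℂ}
    (hf : f ∈ restrictSupport ℂ
      {e : Idx n →₀ ℕ | NonCrossing e ∧ (ε = 0 → e (Sum.inl ⟨(o, z), hoz⟩) = 0)})
    (h : genericMap c o z ε f = 0) : f = 0 := by
  have hdeg : ∀ e ∈ {e : Idx n →₀ ℕ | NonCrossing e ∧
      (ε = 0 → e (Sum.inl ⟨(o, z), hoz⟩) = 0)},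
      genericMap c o z ε (monomial e 1) ≠ 0 ∧
        MonomialOrder.lex.degree (genericMap c o z ε (monomial e 1)) =
          weight (leadExp c o z) e := by
    rintro e ⟨-, he⟩
    have := MonomialOrder.lex.degree_aeval_monomial
      (fun q => genericMap c o z ε (X q)) (leadExp c o z) e fun q hq =>
        degree_genericMap_X hz ho hoz hε q fun h0 hqz =>
          Finsupp.mem_support_iff.mp hq (hqz ▸ he h0)
    rwa [← MvPolynomial.comp_aeval_apply, aeval_X_left_apply] at this
  refine MonomialOrder.lex.eq_zero_of_map_eq_zero (genericMap c o z ε) _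
    (fun e he => (hdeg e he).1) (fun e he e' he' hee => ?_) f
    ((mem_restrictSupport_iff ℂ).mp hf) h
  simp only [(hdeg e he).2, (hdeg e' he').2] at hee
  exact NonCrossing.eq_of_weight_leadExp_eq hz ho he.1 he'.1 hee

theorem genericMap_eq_zero_iff (hz : ∀ i, i ≤ z) (ho : ∀ i, o ≤ i) (hoz : o < z)
    {f : MvPolynomial (Idx n) ℂ} :
    genericMap c o z (-X (snd o)) f = 0 ↔ f ∈ Ideal.span (IGens c n) := by
  refine ⟨fun h => ?_, minorMap_eq_zero_of_mem _ _ _⟩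
  obtain ⟨g, hg, r, hr, rfl⟩ := Submodule.mem_sup.mp (mem_nonCrossing_sup c f)
  rw [map_add, show genericMap c o z (-X (snd o)) r = 0 from minorMap_eq_zero_of_mem _ _ _ hr,
    add_zero] at h
  have hg' := eq_zero_of_genericMap_eq_zero hz ho hoz (Or.inl rfl)
    (restrictSupport_mono ℂ (Set.ofPred_subset_ofPred.mpr fun e he => ⟨he, fun h0 =>
      absurd h0 (neg_ne_zero.mpr (X_ne_zero _))⟩) hg) h
  rw [hg', zero_add]
  exact hr

theorem isPrime_span_IGens (c : ℕ) (hz : ∀ i, i ≤ z) (ho : ∀ i, o ≤ i) (hoz : o < z) :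
    (Ideal.span (IGens c n)).IsPrime := by
  have h : Ideal.span (IGens c n) = RingHom.ker (genericMap c o z (-X (snd o))) :=
    Ideal.ext fun f => (genericMap_eq_zero_iff hz ho hoz).symm
  rw [h]
  exact RingHom.ker_isPrime _

theorem genericMap_W (hoz : o < z) (ε : MvPolynomial (VecIdx n) ℂ) :
    genericMap c o z ε (W o z hoz) = (if z.val < c then 1 else X param) * (X (fst o) * ε) := by
  rw [genericMap, minorMap_W]
  simp [hoz.ne, hoz.ne']

theorem mem_sup_of_genericMap_zero (hz : ∀ i, i ≤ z) (ho : ∀ i, o ≤ i) (hoz : o < z)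
    {f : MvPolynomial (Idx n) ℂ} (h : genericMap c o z 0 f = 0) :
    f ∈ Ideal.span {W o z hoz} ⊔ Ideal.span (IGens c n) := by
  suffices hf : f ∈ restrictSupport ℂ
      {e : Idx n →₀ ℕ | NonCrossing e ∧ e (Sum.inl ⟨(o, z), hoz⟩) = 0} ⊔
      (Ideal.span {W o z hoz} ⊔ Ideal.span (IGens c n)).restrictScalars ℂ by
    obtain ⟨g, hg, r, hr, rfl⟩ := Submodule.mem_sup.mp hf
    have hr0 : genericMap c o z 0 r = 0 := by
      suffices hle : Ideal.span {W o z hoz} ⊔ Ideal.span (IGens c n) ≤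
        RingHom.ker (genericMap c o z 0) from hle hr
      refine sup_le ?_ fun s hs => minorMap_eq_zero_of_mem _ _ _ hs
      rw [Ideal.span_singleton_le_iff_mem, RingHom.mem_ker, genericMap_W, mul_zero, mul_zero]
    rw [map_add, hr0, add_zero] at h
    have hg' := eq_zero_of_genericMap_eq_zero hz ho hoz (Or.inr rfl)
      (restrictSupport_mono ℂ
        (Set.ofPred_subset_ofPred.mpr fun e he => ⟨he.1, fun _ => he.2⟩) hg) h
    rw [hg', zero_add]
    exact hr
  refine SetLike.le_def.mp (sup_le ?_ ?_) (mem_nonCrossing_sup c f)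
  · rw [restrictSupport_eq_span, Submodule.span_le]
    rintro _ ⟨e, he, rfl⟩
    by_cases h0 : e (Sum.inl ⟨(o, z), hoz⟩) = 0
    · exact Submodule.mem_sup_left ((monomial_mem_restrictSupport ℂ).mpr (Or.inl ⟨he, h0⟩))
    · refine Submodule.mem_sup_right (Ideal.mem_sup_left (Ideal.mem_span_singleton.mpr ?_))
      exact X_dvd_monomial.mpr (Or.inr h0)
  · exact fun r hr => Submodule.mem_sup_right (Ideal.mem_sup_right hr)

theorem prime_mk_W (c : ℕ) (hz : ∀ i, i ≤ z) (ho : ∀ i, o ≤ i) (hoz : o < z) :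
    Prime (Ideal.Quotient.mk (Ideal.span (IGens c n)) (W o z hoz)) := by
  set I := Ideal.span (IGens c n)
  have hdvd : ∀ f, Ideal.Quotient.mk I (W o z hoz) ∣ Ideal.Quotient.mk I f ↔
      genericMap c o z 0 f = 0 := by
    refine fun f => ⟨?_, fun h => ?_⟩
    · rintro ⟨r, hr⟩
      obtain ⟨r, rfl⟩ := Ideal.Quotient.mk_surjective r
      rw [← map_mul, Ideal.Quotient.eq] at hr
      have h := minorMap_eq_zero_of_mem (X param : MvPolynomial (VecIdx n) ℂ)
        (fun i => if i = z then -X (fst z) else X (fst i))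
        (fun i => if i = o then 0 else if i = z then 0 else X (snd i)) hr
      change genericMap c o z 0 _ = 0 at h
      rwa [map_sub, map_mul, genericMap_W, mul_zero, mul_zero, zero_mul, sub_zero] at h
    · obtain ⟨a, r, hr, rfl⟩ :=
        Ideal.mem_span_singleton_sup.mp (mem_sup_of_genericMap_zero hz ho hoz h)
      rw [map_add, Ideal.Quotient.eq_zero_iff_mem.mpr hr, add_zero, map_mul]
      exact dvd_mul_left _ _
  refine ⟨fun h => ?_, fun h => ?_, fun a b hab => ?_⟩
  · rw [Ideal.Quotient.eq_zero_iff_mem, ← genericMap_eq_zero_iff hz ho hoz, genericMap_W] at h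
    refine mul_ne_zero ?_ (mul_ne_zero (X_ne_zero _) (neg_ne_zero.mpr (X_ne_zero _))) h
    split_ifs
    exacts [one_ne_zero, X_ne_zero _]
  · have := (hdvd 1).mp (h.dvd)
    rw [map_one] at this
    exact one_ne_zero this
  · obtain ⟨a, rfl⟩ := Ideal.Quotient.mk_surjective a
    obtain ⟨b, rfl⟩ := Ideal.Quotient.mk_surjective b
    rw [← map_mul, hdvd, map_mul] at hab
    exact (mul_eq_zero.mp hab).imp (hdvd a).mpr (hdvd b).mpr

end genericMap

/-- The variables `T_{oi}`, `T_{iz}` and `T_∞`. -/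
def IsBoundary {n : ℕ} (o z : Fin n) : Idx n → Prop :=
  Sum.elim (fun p => p.1.1 = o ∨ p.1.2 = z) (fun _ => True)

section boundary

variable {n : ℕ} {o z : Fin n}

/-- Over a field, the boundary variables take arbitrary nonzero values on points of `R`. -/
theorem exists_minorMap_X_eq {K : Type*} [Field K] [Algebra ℂ K] {c : ℕ} (hoz : o < z)
    (hzc : c ≤ z.val) (ξ : Idx n → K) (hξ : ∀ q, IsBoundary o z q → ξ q ≠ 0) :
    ∃ (t : K) (a b : Fin n → K), ∀ q, IsBoundary o z q → minorMap c t a b (X q) = ξ q := by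
  set t := ξ (Sum.inr ())
  set x := ξ (Sum.inl ⟨(o, z), hoz⟩)
  have ht : t ≠ 0 := hξ _ trivial
  have hx : x ≠ 0 := hξ _ (Or.inl rfl)
  set a : Fin n → K := fun i => if h : i < z then ξ (Sum.inl ⟨(i, z), h⟩) / t else 0 with ha
  set b : Fin n → K := fun i =>
    if h : o < i then (if i.val < c then t else 1) * ξ (Sum.inl ⟨(o, i), h⟩) / x else 0 with hb
  have hao : a o = x / t := dif_pos hoz
  have haz : a z = 0 := dif_neg (lt_irrefl z)
  have hbo : b o = 0 := dif_neg (lt_irrefl o)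
  have hbz : b z = 1 := by
    simp only [hb, dif_pos hoz, if_neg hzc.not_gt, one_mul]
    exact div_self hx
  refine ⟨t, a, b, ?_⟩
  rintro (⟨⟨i, j⟩, hij⟩ | ⟨⟩) hq
  · change minorMap c t a b (W i j hij) = _
    rw [minorMap_W]
    dsimp only at hij
    by_cases hio : i = o
    · subst hio
      rw [hao, hbo, mul_zero, sub_zero]
      simp only [hb, dif_pos hij]
      split_ifs <;> field_simp
    · obtain rfl : j = z := hq.resolve_left hio
      rw [hbz, haz, if_neg hzc.not_gt]
      simp only [ha, dif_pos hij]
      field_simp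
      simp
  · exact minorMap_Tinf _ _ _

/-- The subring of `R` generated by the boundary variables is a polynomial ring. -/
theorem mk_comp_rename_boundary_injective {c : ℕ} (hoz : o < z) (hzc : c ≤ z.val) :
    Function.Injective ((Ideal.Quotient.mk (Ideal.span (IGens c n))).comp
      (rename (Subtype.val : {q : Idx n // IsBoundary o z q} → Idx n) :
        _ →ₐ[ℂ] MvPolynomial (Idx n) ℂ).toRingHom) := by
  classical
  set P := MvPolynomial {q : Idx n // IsBoundary o z q} ℂ
  have hinj := IsFractionRing.injective P (FractionRing P)
  obtain ⟨t, a, b, h⟩ := exists_minorMap_X_eq (K := FractionRing P) hoz hzc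
    (fun q => if h : IsBoundary o z q then algebraMap P _ (X ⟨q, h⟩) else 0) fun q hq => by
      rw [dif_pos hq]
      exact (map_ne_zero_iff _ hinj).mpr (X_ne_zero _)
  have hcomp : (minorMap c t a b).comp (rename Subtype.val) =
      IsScalarTower.toAlgHom ℂ P (FractionRing P) := by
    refine MvPolynomial.algHom_ext fun q => ?_
    rw [AlgHom.comp_apply, rename_X, IsScalarTower.toAlgHom_apply, h _ q.2, dif_pos q.2]
  refine (injective_iff_map_eq_zero _).mpr fun p hp => ?_
  have hmap := minorMap_eq_zero_of_mem t a b (Ideal.Quotient.eq_zero_iff_mem.mp hp)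
  change (minorMap c t a b).comp (rename Subtype.val) p = 0 at hmap
  rw [hcomp] at hmap
  exact (map_eq_zero_iff _ hinj).mp hmap

/-- The boundary variables generate `R` after inverting `T_{oz}`. -/
theorem exists_pow_mul_mk_eq_boundary (c : ℕ) (hz : ∀ i, i ≤ z) (ho : ∀ i, o ≤ i) (hoz : o < z)
    (f : MvPolynomial (Idx n) ℂ) :
    ∃ (m : ℕ) (p : MvPolynomial {q : Idx n // IsBoundary o z q} ℂ),
      W o z hoz ^ m * f - rename Subtype.val p ∈ Ideal.span (IGens c n) := by
  set I := Ideal.span (IGens c n)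
  set x : MvPolynomial {q : Idx n // IsBoundary o z q} ℂ :=
    X ⟨Sum.inl ⟨(o, z), hoz⟩, Or.inl rfl⟩ with hx_def
  have hx : rename Subtype.val x = W o z hoz := by rw [hx_def, rename_X, W]
  have hX : ∀ q, ∃ (m : ℕ) (p : MvPolynomial {q : Idx n // IsBoundary o z q} ℂ),
      W o z hoz ^ m * X q - rename Subtype.val p ∈ I := by
    intro q
    by_cases hq : IsBoundary o z q
    · exact ⟨0, X ⟨q, hq⟩, by simp⟩
    rcases q with ⟨⟨j, k⟩, hjk⟩ | ⟨⟩
    · simp only [IsBoundary, Sum.elim_inl, not_or] at hq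
      have hoj : o < j := lt_of_le_of_ne (ho j) (Ne.symm hq.1)
      have hkz : k < z := lt_of_le_of_ne (hz k) hq.2
      dsimp only at hjk
      let l : ∀ i, o < i → MvPolynomial {q : Idx n // IsBoundary o z q} ℂ :=
        fun i h => X ⟨Sum.inl ⟨(o, i), h⟩, Or.inl rfl⟩
      let r : ∀ i, i < z → MvPolynomial {q : Idx n // IsBoundary o z q} ℂ :=
        fun i h => X ⟨Sum.inl ⟨(i, z), h⟩, Or.inr rfl⟩
      have hl : ∀ i h, rename Subtype.val (l i h) = W o i h := fun i h => rename_X _ _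
      have hr : ∀ i h, rename Subtype.val (r i h) = W i z h := fun i h => rename_X _ _
      have ht : rename Subtype.val (X ⟨Sum.inr (), trivial⟩ :
        MvPolynomial {q : Idx n // IsBoundary o z q} ℂ) = Tinf := rename_X _ _
      by_cases hc : j.val < c ∧ c ≤ k.val
      · refine ⟨1, l k (hoj.trans hjk) * r j (hjk.trans hkz) -
          X ⟨Sum.inr (), trivial⟩ * l j hoj * r k hkz,
          Ideal.subset_span ⟨o, j, k, z, hoj, hjk, hkz, Or.inl ⟨hc, ?_⟩⟩⟩
        simp only [map_sub, map_mul, hl, hr, ht]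
        simp only [W]
        ring
      · refine ⟨1, l k (hoj.trans hjk) * r j (hjk.trans hkz) - l j hoj * r k hkz,
          Ideal.subset_span ⟨o, j, k, z, hoj, hjk, hkz, Or.inr ⟨hc, ?_⟩⟩⟩
        simp only [map_sub, map_mul, hl, hr]
        simp only [W]
        ring
    · exact absurd trivial hq
  induction f using MvPolynomial.induction_on with
  | C r => exact ⟨0, C r, by simp⟩
  | add f g hf hg =>
    obtain ⟨m, p, hp⟩ := hf
    obtain ⟨m', p', hp'⟩ := hg
    refine ⟨m + m', x ^ m' * p + x ^ m * p', ?_⟩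
    convert add_mem (I.mul_mem_left (W o z hoz ^ m') hp) (I.mul_mem_left (W o z hoz ^ m) hp')
      using 1
    simp only [map_add, map_mul, map_pow, hx]
    ring
  | mul_X f q hf =>
    obtain ⟨m, p, hp⟩ := hf
    obtain ⟨m', p', hp'⟩ := hX q
    refine ⟨m + m', p * p', ?_⟩
    convert add_mem (I.mul_mem_left (W o z hoz ^ m' * X q) hp)
      (I.mul_mem_left (rename Subtype.val p) hp') using 1
    simp only [map_mul]
    ring

theorem uniqueFactorizationMonoid_quotient_span_IGens {c : ℕ} (hz : ∀ i, i ≤ z)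
    (ho : ∀ i, o ≤ i) (hoz : o < z) (hzc : c ≤ z.val)
    [IsDomain (MvPolynomial (Idx n) ℂ ⧸ Ideal.span (IGens c n))] :
    UniqueFactorizationMonoid (MvPolynomial (Idx n) ℂ ⧸ Ideal.span (IGens c n)) := by
  set φ := (Ideal.Quotient.mk (Ideal.span (IGens c n))).comp
    (rename (Subtype.val : {q : Idx n // IsBoundary o z q} → Idx n) :
      _ →ₐ[ℂ] MvPolynomial (Idx n) ℂ).toRingHom
  have hx : φ (X ⟨Sum.inl ⟨(o, z), hoz⟩, Or.inl rfl⟩) =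
      Ideal.Quotient.mk (Ideal.span (IGens c n)) (W o z hoz) :=
    congrArg (Ideal.Quotient.mk _) (rename_X _ _)
  refine uniqueFactorizationMonoid_of_prime_of_clears φ
    (mk_comp_rename_boundary_injective hoz hzc)
    (X ⟨Sum.inl ⟨(o, z), hoz⟩, Or.inl rfl⟩) (hx ▸ prime_mk_W c hz ho hoz) fun f => ?_
  obtain ⟨f, rfl⟩ := Ideal.Quotient.mk_surjective f
  obtain ⟨m, p, h⟩ := exists_pow_mul_mk_eq_boundary c hz ho hoz f
  refine ⟨m, p, ?_⟩
  rw [hx, ← map_pow, ← map_mul]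
  exact Ideal.Quotient.eq.mpr h

end boundary

/-- For `c, d > 2` and `n = c + d`, the quotient `R = ℂ[T_{ij}, T_∞]/I` is a unique
factorization domain; in particular `R` is a normal (integrally closed) integral domain. -/
theorem stmt_11 (c d : ℕ) (hc : 2 < c) (hd : 2 < d) :
    IsDomain (MvPolynomial (Idx (c + d)) ℂ ⧸ Ideal.span (IGens c (c + d))) ∧
    (∀ (_ : IsDomain (MvPolynomial (Idx (c + d)) ℂ ⧸ Ideal.span (IGens c (c + d)))),
      UniqueFactorizationMonoid
        (MvPolynomial (Idx (c + d)) ℂ ⧸ Ideal.span (IGens c (c + d)))) ∧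
    IsIntegrallyClosed (MvPolynomial (Idx (c + d)) ℂ ⧸ Ideal.span (IGens c (c + d))) := by

  have hn : 0 < c + d := by omega
  let o : Fin (c + d) := ⟨0, hn⟩
  let z : Fin (c + d) := ⟨c + d - 1, by omega⟩
  have ho : ∀ i, o ≤ i := fun i => Fin.le_def.mpr (Nat.zero_le _)
  have hz : ∀ i, i ≤ z := fun i => Fin.le_def.mpr (Nat.le_sub_one_of_lt i.isLt)
  have hoz : o < z := Fin.lt_def.mpr (show 0 < c + d - 1 by omega)
  have hzc : c ≤ z.val := show c ≤ c + d - 1 by omega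
  have hprime := isPrime_span_IGens c hz ho hoz
  have hdom : IsDomain (MvPolynomial (Idx (c + d)) ℂ ⧸ Ideal.span (IGens c (c + d))) :=
    Ideal.Quotient.isDomain _
  have hufm := uniqueFactorizationMonoid_quotient_span_IGens hz ho hoz hzc
  exact ⟨hdom, fun _ => hufm, inferInstance⟩
end
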